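/- arXiv:1009.6023 — 2 statements merged into one kernel-verified Lean document; each statement's English description precedes it below -/
import Mathlib

section
/- Let $A = (a_{ij}) \in \mathbb{Z}^{d\times d}$ be a lower triangular matrix with positive diagonal entries, and let $\mathcal{P}(A)$ be the simplex whose vertices are the rows of $A$ together with the origin. For an index tuple $(i_1,\ldots,i_d)$ with $1 \leq i_j \leq a_{jj}$, define recursively $\lambda_d^{i_d} = i_d/a_{dd}$ and, for $k < d$, $\lambda_k^{i_k,\ldots,i_d} = a_{kk}^{-1}(i_k - \{\sum_{h=k+1}^d a_{hk}\lambda_h^{i_h,\ldots,i_d}\})$ (where $\{r\}$ denotes the fractional part), and set $s_{i_1\cdots i_d} = \lfloor \sum_{k=1}^d \lambda_k^{i_k,\ldots,i_d} \rfloor + 1$. Then the generating function for interior lattice points satisfies $\sum_{n\geq 1} |n(\mathcal{P}(A) \setminus \partial\mathcal{P}(A)) \cap \mathbb{Z}^d|\, t^n = (1-t)^{-(d+1)} \sum_{(i_1,\ldots,i_d)} t^{s_{i_1\cdots i_d}}$. -/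
open Set Pointwise

/-- The number of lattice points in the `n`-th dilation of `P ⊆ ℝ^N`. -/
noncomputable def ehr {N : ℕ} (P : Set (Fin N → ℝ)) (n : ℕ) : ℕ :=
  Set.ncard {x : Fin N → ℤ | (fun i => (x i : ℝ)) ∈ (n : ℝ) • P}

/-- The `i`-th coefficient of `(1-λ)^(d+1) * (1 + ∑_{n ≥ 1} i(P,n) λ^n)`,
i.e. the `i`-th entry of the δ-vector of a `d`-dimensional integral polytope. -/
noncomputable def deltaVec {N : ℕ} (P : Set (Fin N → ℝ)) (d i : ℕ) : ℤ :=
  ∑ j ∈ Finset.range (i + 1),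
    (-1 : ℤ) ^ (i - j) * (Nat.choose (d + 1) (i - j) : ℤ) * (ehr P j : ℤ)

/-- `P ⊆ ℝ^N` is an integral polytope of dimension `d`. -/
def IsIntegralPolytope {N : ℕ} (P : Set (Fin N → ℝ)) (d : ℕ) : Prop :=
  ∃ V : Finset (Fin N → ℤ), V.Nonempty ∧
    P = convexHull ℝ ((fun v i => ((v i : ℝ))) '' (V : Set (Fin N → ℤ))) ∧
    Module.finrank ℝ (vectorSpan ℝ P) = d

/-- `lamRev d A f m` is `λ_k` (0-indexed `k = d - 1 - m`) defined by the downward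
recursion `λ_k = (i_k - frac(∑_{h > k} a_{h k} λ_h)) / a_{k k}`, where `i_k = f k`. -/
noncomputable def lamRev (d : ℕ) (A : Matrix (Fin d) (Fin d) ℤ) (f : Fin d → ℕ) :
    ℕ → ℚ
  | m =>
    if h : m < d then
      let k : Fin d := ⟨d - 1 - m, by omega⟩
      ((f k : ℚ) - Int.fract (∑ r ∈ (Finset.range m).attach,
        (A ⟨d - 1 - r.1, by omega⟩ k : ℚ) * lamRev d A f r.1)) / (A k k : ℚ)
    else 0
termination_by m => m
decreasing_by exact Finset.mem_range.mp r.2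

/-- `s_{i_1 ⋯ i_d} = ⌊∑_k λ_k⌋ + 1` for the index tuple `f`. -/
noncomputable def sVal (d : ℕ) (A : Matrix (Fin d) (Fin d) ℤ) (f : Fin d → ℕ) : ℤ :=
  ⌊∑ m ∈ Finset.range d, lamRev d A f m⌋ + 1

/-
With respect to the rows of `A`, the interior of the `n`-th dilate is the set of `c` with positive
coordinates and `∑ c < n`. Each such `c` is uniquely `u + m` with `u ∈ (0, 1]^d` and `m ∈ ℕ^d`, and
`c` represents a lattice point iff `u` does, so each such `u` in the half-open box contributes
`X ^ (⌊∑ u⌋ + 1) / (1 - X) ^ (d + 1)`. As `A` is lower triangular, integrality of the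
`k`-th entry of `u A` says that `a_kk u_k + {∑_{h > k} a_hk u_h}` is an integer, necessarily
`i_k = ⌈a_kk u_k⌉`; these equations are the recursion for `λ`, so `i ↦ λ` enumerates the box.
-/

section Simplex

variable {ι : Type*}

/-- The affine basis formed by the origin (at index `none`) and the vectors of a linear basis; its
barycentric coordinates describe the simplex spanned by these points. -/
noncomputable def affineBasisOfBasis {k V : Type*} [Ring k] [AddCommGroup V] [Module k V]
    (b : Module.Basis ι k V) : AffineBasis (Option ι) k V where
  toFun o := o.elim 0 b
  ind' := by
    rw [affineIndependent_iff_linearIndependent_vsub k _ none]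
    let f (o : {o : Option ι // o ≠ none}) : ι := o.1.get (Option.isSome_iff_ne_none.2 o.2)
    have hf : Function.Injective f := fun o o' h => Subtype.ext (Option.get_inj.1 h)
    convert b.linearIndependent.comp f hf with o
    obtain ⟨_ | i, ho⟩ := o
    · exact absurd rfl ho
    · simp [f]
  tot' := by
    rw [Option.range_elim, ← AffineSubspace.coe_eq_univ_iff, affineSpan_insert_zero, b.span_eq]
    rfl

theorem coe_affineBasisOfBasis {k V : Type*} [Ring k] [AddCommGroup V] [Module k V]
    (b : Module.Basis ι k V) : ⇑(affineBasisOfBasis b) = fun o => o.elim 0 b :=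
  rfl

theorem coord_some_affineBasisOfBasis {k V : Type*} [Ring k] [AddCommGroup V] [Module k V]
    [Finite ι] (b : Module.Basis ι k V) (x : V) (i : ι) :
    (affineBasisOfBasis b).coord (some i) x = b.repr x i := by
  have := Fintype.ofFinite ι
  have h := (affineBasisOfBasis b).linear_combination_coord_eq_self x
  rw [Fintype.sum_option] at h
  have : ∑ j, (affineBasisOfBasis b).coord (some j) x • b j = x := by
    simpa [coe_affineBasisOfBasis] using h
  rw [← congrFun (b.repr_sum_self fun j => (affineBasisOfBasis b).coord (some j) x) i, this]

theorem interior_convexHull_insert_zero_range {V : Type*} [NormedAddCommGroup V]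
    [NormedSpace ℝ V] [Fintype ι] (b : Module.Basis ι ℝ V) :
    interior (convexHull ℝ (insert 0 (range b))) =
      {x | (∀ i, 0 < b.repr x i) ∧ ∑ i, b.repr x i < 1} := by
  have hrange : insert 0 (range b) = range (affineBasisOfBasis b) := (Option.range_elim _ _).symm
  ext x
  have hsum := (affineBasisOfBasis b).sum_coord_apply_eq_one x
  simp only [Fintype.sum_option, coord_some_affineBasisOfBasis] at hsum
  rw [hrange, AffineBasis.interior_convexHull, mem_ofPred_eq, mem_ofPred_eq, Option.forall]
  simp only [coord_some_affineBasisOfBasis, ← hsum, lt_add_iff_pos_left]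
  exact and_comm

theorem mem_smul_interior_convexHull_insert_zero_range {V : Type*} [NormedAddCommGroup V]
    [NormedSpace ℝ V] [Fintype ι] (b : Module.Basis ι ℝ V) {r : ℝ} (hr : 0 < r) (x : V) :
    x ∈ r • interior (convexHull ℝ (insert 0 (range b))) ↔
      (∀ i, 0 < b.repr x i) ∧ ∑ i, b.repr x i < r := by
  rw [interior_convexHull_insert_zero_range, mem_smul_set_iff_inv_smul_mem₀ hr.ne']
  simp [← Finset.mul_sum, inv_mul_lt_iff₀ hr, hr]

end Simplex

section Counting

variable {ι : Type*}

theorem bijOn_add_natCast :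
    BijOn (fun p : (_ : ι → ℝ) × (ι → ℕ) => p.1 + fun i => (p.2 i : ℝ))
      {p | ∀ i, p.1 i ∈ Ioc 0 1} {c | ∀ i, 0 < c i} := by
  refine InvOn.bijOn (f' := fun c => ⟨fun i => c i - (⌈c i⌉₊ - 1 : ℕ), fun i => ⌈c i⌉₊ - 1⟩)
    ⟨fun p hp => ?_, fun c _ => ?_⟩ (fun p hp i => ?_) (fun c hc i => ?_)
  · have hceil (i : ι) : ⌈p.1 i + p.2 i⌉₊ - 1 = p.2 i := by
      rw [Nat.ceil_add_natCast (hp i).1.le, (Nat.ceil_eq_iff one_ne_zero).2 (by simpa using hp i),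
        Nat.add_sub_cancel_left]
    simp [hceil]
  · ext i
    simp
  · exact add_pos_of_pos_of_nonneg (hp i).1 (Nat.cast_nonneg _)
  · have h := (Nat.ceil_eq_iff (Nat.ceil_pos.2 (hc i)).ne').1 rfl
    change c i - ((⌈c i⌉₊ - 1 : ℕ) : ℝ) ∈ Ioc 0 1
    rw [Nat.cast_pred (Nat.ceil_pos.2 (hc i))] at h ⊢
    constructor <;> linarith

theorem floor_add_one_add_le_iff {a : ℝ} (ha : 0 ≤ a) (m n : ℕ) :
    ⌊a⌋₊ + 1 + m ≤ n ↔ a + m < n := by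
  rw [← Nat.floor_lt (by positivity), Nat.floor_add_natCast ha]
  omega

variable [Fintype ι]

theorem finite_sum_le (n : ℕ) : {m : ι → ℕ | ∑ i, m i ≤ n}.Finite := by
  classical
  exact (finite_Iic fun _ => n).subset fun m hm i =>
    (Finset.single_le_sum (fun j _ => Nat.zero_le (m j)) (Finset.mem_univ i)).trans hm

theorem ncard_sum_le (n : ℕ) :
    {m : ι → ℕ | ∑ i, m i ≤ n}.ncard = (Fintype.card ι + n).choose (Fintype.card ι) := by
  classical
  have hbij : BijOn (fun l : Option ι →₀ ℕ => fun i => l (some i))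
      (Finset.univ.finsuppAntidiag n : Finset (Option ι →₀ ℕ)) {m | ∑ i, m i ≤ n} := by
    have hmem (l : Option ι →₀ ℕ) :
        l ∈ Finset.univ.finsuppAntidiag n ↔ l none + ∑ i, l (some i) = n := by
      simp [Finset.mem_finsuppAntidiag, Fintype.sum_option]
    refine ⟨fun l hl => ?_, fun l hl l' hl' h => ?_, fun m hm => ?_⟩
    · exact le_of_add_le_right ((hmem l).1 hl).le
    · have hsome (i : ι) : l (some i) = l' (some i) := congrFun h i
      have hnone : l none = l' none := by
        apply Nat.add_right_cancel (m := ∑ i, l (some i))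
        rw [(hmem l).1 hl, Finset.sum_congr rfl fun i _ => hsome i, (hmem l').1 hl']
      ext o
      cases o with
      | none => exact hnone
      | some i => exact hsome i
    · exact ⟨Finsupp.equivFunOnFinite.symm fun o => o.elim (n - ∑ i, m i) m,
        (hmem _).2 (Nat.sub_add_cancel hm), rfl⟩
  rw [← hbij.ncard_eq, ncard_coe_finset, Finset.card_finsuppAntidiag_nat_eq_choose,
    Finset.card_univ, Fintype.card_option, Nat.add_right_comm, Nat.add_sub_cancel,
    Nat.choose_symm_add]

theorem mk_ncard_add_sum_le_mul_one_sub_X_pow {R : Type*} [CommRing R] (s : ℕ) :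
    (PowerSeries.mk fun n => ({m : ι → ℕ | s + ∑ i, m i ≤ n}.ncard : R)) *
      (1 - PowerSeries.X) ^ (Fintype.card ι + 1) = PowerSeries.X ^ s := by
  have hshift : (PowerSeries.mk fun n => ({m : ι → ℕ | s + ∑ i, m i ≤ n}.ncard : R)) =
      PowerSeries.X ^ s *
        PowerSeries.mk fun n => ((Fintype.card ι + n).choose (Fintype.card ι) : R) := by
    ext n
    rw [PowerSeries.coeff_X_pow_mul', PowerSeries.coeff_mk]
    split_ifs with hsn
    · simp only [PowerSeries.coeff_mk, ← ncard_sum_le, Nat.le_sub_iff_add_le' hsn]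
    · have : ∀ m : ι → ℕ, ¬ s + ∑ i, m i ≤ n := fun m => by omega
      simp [this]
  rw [hshift, mul_assoc, PowerSeries.mk_add_choose_mul_one_sub_pow_eq_one, mul_one]

variable {Λ : Set (ι → ℝ)} {U : Finset (ι → ℝ)}

theorem ncard_pos_sum_lt
    (hΛ : ∀ (c : ι → ℝ) (m : ι → ℕ), (c + fun i => (m i : ℝ)) ∈ Λ ↔ c ∈ Λ)
    (hU : ∀ u, u ∈ U ↔ u ∈ Λ ∧ ∀ i, u i ∈ Ioc 0 1) (n : ℕ) :
    {c | c ∈ Λ ∧ (∀ i, 0 < c i) ∧ ∑ i, c i < n}.ncard =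
      ∑ u ∈ U, {m : ι → ℕ | ⌊∑ i, u i⌋₊ + 1 + ∑ i, m i ≤ n}.ncard := by
  have hfin (s : ℕ) : {m : ι → ℕ | s + ∑ i, m i ≤ n}.Finite :=
    (finite_sum_le n).subset fun m hm => (le_of_add_le_right hm : ∑ i, m i ≤ n)
  have hbij := bijOn_add_natCast.subset_right
    (r := {c : ι → ℝ | c ∈ Λ ∧ (∀ i, 0 < c i) ∧ ∑ i, c i < n}) fun c hc => hc.2.1
  have hdom : {p : (_ : ι → ℝ) × (ι → ℕ) | ∀ i, p.1 i ∈ Ioc 0 1} ∩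
      (fun p => p.1 + fun i => (p.2 i : ℝ)) ⁻¹' {c | c ∈ Λ ∧ (∀ i, 0 < c i) ∧ ∑ i, c i < n} =
      (U.sigma fun u => (hfin (⌊∑ i, u i⌋₊ + 1)).toFinset :) := by
    ext ⟨u, m⟩
    simp only [mem_inter_iff, mem_preimage, mem_ofPred_eq, hΛ, Finset.coe_sigma, mem_sigma_iff,
      Finset.mem_coe, hU, Finite.mem_toFinset, and_assoc, Pi.add_apply, Finset.sum_add_distrib,
      ← Nat.cast_sum]
    rw [and_left_comm]
    refine and_congr_right fun _ => and_congr_right fun hu => ?_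
    rw [floor_add_one_add_le_iff (Finset.sum_nonneg fun i _ => (hu i).1.le)]
    exact and_iff_right (bijOn_add_natCast.mapsTo (x := ⟨u, m⟩) hu)
  rw [← hbij.ncard_eq, hdom, ncard_coe_finset, Finset.card_sigma]
  simp only [ncard_eq_toFinset_card _ (hfin _)]

theorem mk_ncard_pos_sum_lt_mul_one_sub_X_pow {R : Type*} [CommRing R]
    (hΛ : ∀ (c : ι → ℝ) (m : ι → ℕ), (c + fun i => (m i : ℝ)) ∈ Λ ↔ c ∈ Λ)
    (hU : ∀ u, u ∈ U ↔ u ∈ Λ ∧ ∀ i, u i ∈ Ioc 0 1) :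
    (PowerSeries.mk fun n : ℕ => ({c | c ∈ Λ ∧ (∀ i, 0 < c i) ∧ ∑ i, c i < n}.ncard : R)) *
      (1 - PowerSeries.X) ^ (Fintype.card ι + 1) =
      ∑ u ∈ U, PowerSeries.X ^ (⌊∑ i, u i⌋₊ + 1) := by
  simp only [← mk_ncard_add_sum_le_mul_one_sub_X_pow (ι := ι), ← Finset.sum_mul]
  congr 1
  ext n
  rw [PowerSeries.coeff_mk, ncard_pos_sum_lt hΛ hU, map_sum, Nat.cast_sum]
  simp only [PowerSeries.coeff_mk]

end Counting

section Lattice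

variable {ι : Type*} [Fintype ι]

/-- The coordinate vectors, with respect to the rows of `M`, of the integer points. In these
coordinates the simplex becomes the standard one, at the price of replacing `ℤ^ι` by this set. -/
def integralCoords (M : Matrix ι ι ℤ) : Set (ι → ℝ) :=
  {c | ∃ x : ι → ℤ, Matrix.vecMul c (M.map Int.cast) = fun i => (x i : ℝ)}

theorem add_natCast_mem_integralCoords (M : Matrix ι ι ℤ) (c : ι → ℝ) (m : ι → ℕ) :
    (c + fun i => (m i : ℝ)) ∈ integralCoords M ↔ c ∈ integralCoords M := by
  let y : ι → ℤ := Matrix.vecMul (fun i => (m i : ℤ)) M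
  have hy : Matrix.vecMul (fun i => (m i : ℝ)) (M.map Int.cast) = fun i => (y i : ℝ) := by
    ext j
    simp [y, Matrix.vecMul, dotProduct]
  simp only [integralCoords, mem_ofPred_eq, Matrix.add_vecMul, hy]
  constructor
  · rintro ⟨x, hx⟩
    refine ⟨x - y, ?_⟩
    rw [eq_sub_of_add_eq hx]
    ext; simp
  · rintro ⟨x, hx⟩
    refine ⟨x + y, ?_⟩
    rw [hx]
    ext; simp

theorem ncard_smul_interior_convexHull_insert_zero_rows [DecidableEq ι] {M : Matrix ι ι ℤ}
    (hM : M.det ≠ 0) {r : ℝ} (hr : 0 < r) :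
    {x : ι → ℤ | (fun i => (x i : ℝ)) ∈ r • interior (convexHull ℝ
      (insert 0 (range fun i j => (M i j : ℝ))))}.ncard =
    {c | c ∈ integralCoords M ∧ (∀ i, 0 < c i) ∧ ∑ i, c i < r}.ncard := by
  classical
  have hdet : (M.map (Int.cast : ℤ → ℝ)).det ≠ 0 := by
    rw [← Int.cast_det]
    exact_mod_cast hM
  let b := basisOfPiSpaceOfLinearIndependent (Matrix.linearIndependent_rows_of_det_ne_zero hdet)
  have hb : ⇑b = fun i j => (M i j : ℝ) := coe_basisOfPiSpaceOfLinearIndependent _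
  have hsymm (c : ι → ℝ) : b.equivFun.symm c = Matrix.vecMul c (M.map Int.cast) := by
    rw [b.equivFun_symm_apply, Matrix.vecMul_eq_sum, hb]
    rfl
  have hbij : BijOn (fun x : ι → ℤ => b.equivFun fun i => (x i : ℝ))
      {x : ι → ℤ | (fun i => (x i : ℝ)) ∈ r • interior (convexHull ℝ
        (insert 0 (range fun i j => (M i j : ℝ))))}
      {c | c ∈ integralCoords M ∧ (∀ i, 0 < c i) ∧ ∑ i, c i < r} := by
    refine ⟨fun x hx => ?_, fun x _ y _ hxy => ?_, fun c hc => ?_⟩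
    · rw [mem_ofPred_eq, ← hb, mem_smul_interior_convexHull_insert_zero_range b hr] at hx
      exact ⟨⟨x, by rw [← hsymm, LinearEquiv.symm_apply_apply]⟩, hx⟩
    · ext i
      exact_mod_cast congrFun (b.equivFun.injective hxy) i
    · obtain ⟨⟨x, hx⟩, hc⟩ := hc
      rw [← hsymm, LinearEquiv.symm_apply_eq] at hx
      refine ⟨x, ?_, hx.symm⟩
      rw [mem_ofPred_eq, ← hb, mem_smul_interior_convexHull_insert_zero_range b hr]
      rw [hx] at hc
      exact hc
  exact hbij.ncard_eq

theorem ite_ncard_smul_interior_convexHull_insert_zero_rows [DecidableEq ι] {M : Matrix ι ι ℤ}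
    (hM : M.det ≠ 0) (n : ℕ) :
    (if n = 0 then (0 : ℤ) else {x : ι → ℤ | (fun i => (x i : ℝ)) ∈ (n : ℝ) • interior
      (convexHull ℝ (insert 0 (range fun i j => (M i j : ℝ))))}.ncard) =
    {c | c ∈ integralCoords M ∧ (∀ i, 0 < c i) ∧ ∑ i, c i < n}.ncard := by
  split_ifs with hn
  · have hempty (c : ι → ℝ) : ¬ (c ∈ integralCoords M ∧ (∀ i, 0 < c i) ∧ ∑ i, c i < n) := by
      rintro ⟨_, hpos, hsum⟩
      rw [hn, Nat.cast_zero] at hsum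
      exact (Finset.sum_nonneg fun i _ => (hpos i).le).not_gt hsum
    simp [hempty]
  · rw [ncard_smul_interior_convexHull_insert_zero_rows hM (by positivity)]

end Lattice

section Lam

theorem eq_ceil_sub_fract {x s : ℝ} {z : ℤ} (h : x + s = z) : x = ⌈x⌉ - Int.fract s := by
  obtain rfl : x = z - s := by linarith
  rw [sub_eq_add_neg, add_comm, Int.ceil_add_intCast, Int.ceil_neg, ← Int.self_sub_floor]
  push_cast
  ring

theorem sum_Ioi_eq_sum_attach_range {M : Type*} [AddCommMonoid M] {d : ℕ} (k : Fin d)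
    (g : Fin d → M) : ∑ h ∈ Finset.Ioi k, g h =
      ∑ r ∈ (Finset.range (d - 1 - k)).attach, g ⟨d - 1 - r.1, by grind⟩ := by
  refine Finset.sum_bij' (fun h hh => ⟨d - 1 - h, ?_⟩) (fun r _ => ⟨d - 1 - r.1, ?_⟩)
    ?_ ?_ ?_ ?_ ?_
  all_goals grind

/-- The number `λ_k` of the recursion, indexed by `k` itself instead of `d - 1 - k`, and real since
it serves as a coordinate of a point of the simplex. -/
noncomputable def lam {d : ℕ} (A : Matrix (Fin d) (Fin d) ℤ) (f : Fin d → ℕ) (k : Fin d) : ℝ :=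
  (lamRev d A f (d - 1 - k) : ℚ)

variable {d : ℕ} {A : Matrix (Fin d) (Fin d) ℤ}

theorem sVal_eq_floor_sum_lam (A : Matrix (Fin d) (Fin d) ℤ) (f : Fin d → ℕ) :
    sVal d A f = ⌊∑ k, lam A f k⌋ + 1 := by
  simp only [lam]
  rw [sVal, ← Finset.sum_range_reflect, Finset.sum_range, ← Rat.cast_sum, Rat.floor_cast]

theorem mul_lam {k : Fin d} (hk : A k k ≠ 0) (f : Fin d → ℕ) :
    (A k k : ℝ) * lam A f k =
      f k - Int.fract (∑ h ∈ Finset.Ioi k, (A h k : ℝ) * lam A f h) := by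
  have hidx : (⟨d - 1 - (d - 1 - k), by omega⟩ : Fin d) = k := by grind
  rw [lam, lamRev, dif_pos (by omega), sum_Ioi_eq_sum_attach_range]
  simp only [hidx, lam]
  push_cast
  rw [mul_div_cancel₀ _ (Int.cast_ne_zero.2 hk)]
  congr! 5
  grind

theorem lam_eq (hdiag : ∀ i, A i i ≠ 0) {f : Fin d → ℕ} {c : Fin d → ℝ}
    (hc : ∀ k, (A k k : ℝ) * c k = f k - Int.fract (∑ h ∈ Finset.Ioi k, (A h k : ℝ) * c h)) :
    lam A f = c := by
  ext k
  induction k using WellFoundedGT.induction with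
  | _ k ih =>
    apply mul_left_cancel₀ (Int.cast_ne_zero.2 (hdiag k) : (A k k : ℝ) ≠ 0)
    rw [mul_lam (hdiag k), hc, Finset.sum_congr rfl fun h hh => by rw [ih h (Finset.mem_Ioi.1 hh)]]

theorem natCeil_mul_lam {k : Fin d} (hk : A k k ≠ 0) (f : Fin d → ℕ) :
    ⌈(A k k : ℝ) * lam A f k⌉₊ = f k := by
  have hceil : ⌈(A k k : ℝ) * lam A f k⌉ = f k := by
    have h₀ := Int.fract_nonneg (∑ h ∈ Finset.Ioi k, (A h k : ℝ) * lam A f h)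
    have h₁ := Int.fract_lt_one (∑ h ∈ Finset.Ioi k, (A h k : ℝ) * lam A f h)
    rw [mul_lam hk, Int.ceil_eq_iff]
    push_cast
    constructor <;> linarith
  rw [← Int.ceil_toNat, hceil, Int.toNat_natCast]

theorem lam_injective (hdiag : ∀ i, A i i ≠ 0) : Function.Injective (lam A) := fun f g hfg => by
  ext k
  rw [← natCeil_mul_lam (hdiag k) f, hfg, natCeil_mul_lam (hdiag k)]

theorem lam_mem_Ioc_iff {k : Fin d} (hk : 0 < A k k) {f : Fin d → ℕ} :
    lam A f k ∈ Ioc 0 1 ↔ f k ∈ Finset.Icc 1 (A k k).toNat := by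
  have hkR : (0 : ℝ) < A k k := by exact_mod_cast hk
  have hcast : ((A k k).toNat : ℝ) = A k k := by exact_mod_cast Int.toNat_of_nonneg hk.le
  rw [Finset.mem_Icc, ← natCeil_mul_lam hk.ne' f, Nat.one_le_ceil_iff, Nat.ceil_le, hcast,
    mul_pos_iff_of_pos_left hkR, mul_le_iff_le_one_right hkR, mem_Ioc]

theorem vecMul_apply_of_lower (hlow : ∀ i j, i < j → A i j = 0) (c : Fin d → ℝ) (k : Fin d) :
    Matrix.vecMul c (A.map Int.cast) k =
      A k k * c k + ∑ h ∈ Finset.Ioi k, (A h k : ℝ) * c h := by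
  have hzero : ∀ h ∈ Finset.univ, h ∉ Finset.Ici k → (A h k : ℝ) * c h = 0 := fun h _ hh => by
    rw [hlow h k (by simpa using hh), Int.cast_zero, zero_mul]
  simp only [Matrix.vecMul, dotProduct, Matrix.map_apply, mul_comm (c _)]
  rw [← Finset.sum_subset (Finset.subset_univ _) hzero, ← Finset.Ioi_insert,
    Finset.sum_insert Finset.notMem_Ioi_self]

theorem det_ne_zero_of_lower (hlow : ∀ i j, i < j → A i j = 0) (hdiag : ∀ i, A i i ≠ 0) :
    A.det ≠ 0 := by
  rw [A.det_of_isLowerTriangular fun i j hij => hlow i j hij]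
  exact Finset.prod_ne_zero_iff.2 fun i _ => hdiag i

theorem lam_mem_integralCoords (hlow : ∀ i j, i < j → A i j = 0) (hdiag : ∀ i, A i i ≠ 0)
    (f : Fin d → ℕ) : lam A f ∈ integralCoords A := by
  refine ⟨fun k => f k + ⌊∑ h ∈ Finset.Ioi k, (A h k : ℝ) * lam A f h⌋, ?_⟩
  ext k
  rw [vecMul_apply_of_lower hlow, mul_lam (hdiag k), ← Int.self_sub_floor]
  push_cast
  ring

theorem lam_natCeil_mul (hlow : ∀ i j, i < j → A i j = 0) (hdiag : ∀ i, 0 < A i i)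
    {c : Fin d → ℝ} (hc : c ∈ integralCoords A) (hpos : ∀ k, 0 ≤ c k) :
    lam A (fun k => ⌈(A k k : ℝ) * c k⌉₊) = c := by
  obtain ⟨x, hx⟩ := hc
  refine lam_eq (fun i => (hdiag i).ne') fun k => ?_
  have hk : (0 : ℝ) ≤ A k k := by exact_mod_cast (hdiag k).le
  rw [natCast_ceil_eq_intCast_ceil (mul_nonneg hk (hpos k))]
  apply eq_ceil_sub_fract (z := x k)
  rw [← vecMul_apply_of_lower hlow, hx]

theorem mem_image_lam_iff (hlow : ∀ i j, i < j → A i j = 0) (hdiag : ∀ i, 0 < A i i)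
    (u : Fin d → ℝ) :
    u ∈ (Fintype.piFinset fun j => Finset.Icc 1 (A j j).toNat).image (lam A) ↔
      u ∈ integralCoords A ∧ ∀ i, u i ∈ Ioc 0 1 := by
  simp only [Finset.mem_image, Fintype.mem_piFinset, ← lam_mem_Ioc_iff (hdiag _)]
  constructor
  · rintro ⟨f, hf, rfl⟩
    exact ⟨lam_mem_integralCoords hlow (fun i => (hdiag i).ne') f, hf⟩
  · rintro ⟨hu, hu₁⟩
    have hlam := lam_natCeil_mul hlow hdiag hu fun k => (hu₁ k).1.le
    exact ⟨_, by rwa [hlam], hlam⟩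

theorem toNat_sVal {f : Fin d → ℕ} (hf : 0 ≤ ∑ k, lam A f k) :
    (sVal d A f).toNat = ⌊∑ k, lam A f k⌋₊ + 1 := by
  rw [sVal_eq_floor_sum_lam, Int.toNat_add (Int.floor_nonneg.2 hf) zero_le_one, Int.floor_toNat,
    Int.toNat_one]

end Lam

theorem stmt3 (d : ℕ) (A : Matrix (Fin d) (Fin d) ℤ)
    (hlow : ∀ i j, i < j → A i j = 0) (hdiag : ∀ i, 0 < A i i)
    (P : Set (Fin d → ℝ))
    (hP : P = convexHull ℝ
      (insert (0 : Fin d → ℝ) (Set.range fun i j => (A i j : ℝ)))) :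
    (PowerSeries.mk fun n => if n = 0 then (0 : ℤ) else
        (Set.ncard {x : Fin d → ℤ | (fun i => (x i : ℝ)) ∈ (n : ℝ) • interior P} : ℤ)) *
      (1 - PowerSeries.X) ^ (d + 1)
    = ∑ f ∈ Fintype.piFinset (fun j : Fin d => Finset.Icc 1 (A j j).toNat),
        PowerSeries.X ^ (sVal d A f).toNat := by
  have hdiag' (i : Fin d) : A i i ≠ 0 := (hdiag i).ne'
  simp only [hP, ite_ncard_smul_interior_convexHull_insert_zero_rows
    (det_ne_zero_of_lower hlow hdiag')]
  have hgen := mk_ncard_pos_sum_lt_mul_one_sub_X_pow (R := ℤ) (add_natCast_mem_integralCoords A)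
    (mem_image_lam_iff hlow hdiag)
  rw [Fintype.card_fin, Finset.sum_image (lam_injective hdiag').injOn] at hgen
  rw [hgen]
  refine Finset.sum_congr rfl fun f hf => ?_
  have hlam (k : Fin d) := (lam_mem_Ioc_iff (hdiag k)).2 (Fintype.mem_piFinset.1 hf k)
  rw [toNat_sVal (Finset.sum_nonneg fun k _ => (hlam k).1.le)]
end

section
/- Let $D \geq 1$ and let $A_D \in \mathbb{Z}^{d\times d}$ be the matrix equal to the identity except that row $k$ is $(a_1,\ldots,a_{k-1},D,0,\ldots,0)$ with $0 \leq a_\ell < D$. For $j = 1,\ldots,D-1$ let $d_j$ be the number of indices $\ell$ with $a_\ell = j$. Then the $\delta$-polynomial of the simplex $\mathcal{P}(A_D)$ (rows of $A_D$ together with the origin) is $\sum_{i=1}^D t^{d+1-s_i}$, where $s_i = \lfloor i/D - \sum_{j=1}^{D-1}\{ij/D\}\,d_j \rfloor + d$ and $\{r\}$ denotes fractional part. -/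
open Set Pointwise

/-!
Let `b` be a basis of `ℝ^d` consisting of lattice vectors. Taking integer and fractional parts of
coordinates writes each lattice point of the cone spanned by `b` uniquely as a point `z` of the
half-open box plus a combination of `b` with natural coefficients `y`, and it lies in the `n`-th
dilation of the simplex on the origin and `b` iff `h(z) + ∑ y ≤ n`, where `h(z)` is the rounded-up
coordinate sum of `z`. Hence the Ehrhart series is `∑_z λ^{h(z)} / (1 - λ)^(d+1)`.

When `b` is the standard basis with its `k`-th vector replaced by an integer vector `w` with
`w_k = D`, a box point is determined by its `k`-th entry, which takes the values `D - i` for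
`1 ≤ i ≤ D`. The coordinates of this point are `1 - i/D` at `k` and `{i w_j / D}` elsewhere, and
collecting the `w_j` by residue class modulo `D` gives `h = d + 1 - s_i`.
-/

open Module (Basis)

section Counting

variable (ι : Type*) [Fintype ι]

/-- Stars and bars: the slack `m - ∑ i, y i` becomes the value at the extra point `none`. -/
noncomputable def natSumLEEquivOption (m : ℕ) :
    {y : ι → ℕ // ∑ i, y i ≤ m} ≃ {p : Option ι → ℕ // ∑ o, p o = m} where
  toFun y := ⟨fun o => o.elim (m - ∑ i, y.1 i) y.1, by
    simpa [Fintype.sum_option] using Nat.sub_add_cancel y.2⟩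
  invFun p := ⟨fun i => p.1 (some i), by
    have hp := p.2
    rw [Fintype.sum_option] at hp
    exact le_of_add_le_right hp.le⟩
  left_inv _ := rfl
  right_inv p := by
    have hp := p.2
    rw [Fintype.sum_option] at hp
    ext (_ | i)
    · exact Nat.sub_eq_of_eq_add hp.symm
    · rfl

/-- Vectors of natural numbers with sum at most `m`, as multisets of size `m` on one more point.
This makes Mathlib's count of multisets available. -/
noncomputable def natSumLEEquivSym [DecidableEq ι] (m : ℕ) :
    {y : ι → ℕ // ∑ i, y i ≤ m} ≃ Sym (Option ι) m :=
  (natSumLEEquivOption ι m).trans (Sym.equivNatSumOfFintype (Option ι) m).symm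

theorem natCard_natSum_le (m : ℕ) :
    Nat.card {y : ι → ℕ // ∑ i, y i ≤ m} = (Fintype.card ι + m).choose (Fintype.card ι) := by
  classical
  rw [Nat.card_congr (natSumLEEquivSym ι m), Nat.card_eq_fintype_card,
    Sym.card_sym_eq_multichoose, Nat.multichoose_eq, Fintype.card_option,
    show Fintype.card ι + 1 + m - 1 = Fintype.card ι + m by omega, Nat.choose_symm_add]

theorem finite_natSum_le (h n : ℕ) : Finite {y : ι → ℕ // h + ∑ i, y i ≤ n} := by
  classical
  have hfin : {y : ι → ℕ | ∑ i, y i ≤ n}.Finite := Finite.of_equiv _ (natSumLEEquivSym ι n).symm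
  exact hfin.subset fun y (hy : h + ∑ i, y i ≤ n) => le_of_add_le_right hy

theorem natCard_add_natSum_le (h n : ℕ) :
    Nat.card {y : ι → ℕ // h + ∑ i, y i ≤ n} =
      if h ≤ n then (Fintype.card ι + (n - h)).choose (Fintype.card ι) else 0 := by
  split_ifs with hn
  · rw [← natCard_natSum_le]
    exact Nat.card_congr (Equiv.subtypeEquivRight fun y => by omega)
  · have : IsEmpty {y : ι → ℕ // h + ∑ i, y i ≤ n} := ⟨fun y => by have := y.2; omega⟩
    exact Nat.card_of_isEmpty

open PowerSeries in
theorem mk_natCard_add_natSum_le_mul_one_sub_X_pow (h : ℕ) :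
    (mk fun n => (Nat.card {y : ι → ℕ // h + ∑ i, y i ≤ n} : ℤ)) *
      (1 - X) ^ (Fintype.card ι + 1) = X ^ h := by
  have hmk : (mk fun n => (Nat.card {y : ι → ℕ // h + ∑ i, y i ≤ n} : ℤ)) =
      X ^ h * mk fun n => ((Fintype.card ι + n).choose (Fintype.card ι) : ℤ) := by
    ext n
    rw [coeff_mk, natCard_add_natSum_le, coeff_X_pow_mul', coeff_mk]
    split_ifs <;> rfl
  rw [hmk, mul_assoc, mk_add_choose_mul_one_sub_pow_eq_one, mul_one]

end Counting

section Simplex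

variable {ι E : Type*} [Fintype ι] [NormedAddCommGroup E] [NormedSpace ℝ E]

/-- The simplex with vertices the origin and the vectors of `b`. -/
def originSimplex (b : ι → E) : Set E :=
  convexHull ℝ (insert 0 (Set.range b))

theorem mem_originSimplex_iff (b : Basis ι ℝ E) (x : E) :
    x ∈ originSimplex b ↔ (∀ i, 0 ≤ b.repr x i) ∧ ∑ i, b.repr x i ≤ 1 := by
  classical
  constructor
  · have hsub : originSimplex b ⊆ {x | (∀ i, 0 ≤ b.repr x i) ∧ ∑ i, b.repr x i ≤ 1} := by
      refine convexHull_min ?_ ?_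
      · rintro _ (rfl | ⟨j, rfl⟩)
        · simp
        · refine ⟨fun i => ?_, by simp [Finsupp.single_apply]⟩
          rw [b.repr_self, Finsupp.single_apply]
          split_ifs <;> norm_num
      · rintro x ⟨hx0, hx1⟩ y ⟨hy0, hy1⟩ s t hs ht hst
        simp only [Set.mem_ofPred_eq, map_add, map_smul, Finsupp.add_apply, Finsupp.smul_apply,
          smul_eq_mul, Finset.sum_add_distrib, ← Finset.mul_sum]
        exact ⟨fun i => add_nonneg (mul_nonneg hs (hx0 i)) (mul_nonneg ht (hy0 i)), by nlinarith⟩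
    exact fun hx => hsub hx
  · rintro ⟨hx0, hx1⟩
    refine mem_convexHull_of_exists_fintype
      (fun o : Option ι => o.elim (1 - ∑ i, b.repr x i) (b.repr x)) (fun o => o.elim 0 b)
      ?_ ?_ ?_ ?_
    · rintro (_ | i)
      exacts [sub_nonneg.2 hx1, hx0 i]
    · simp [Fintype.sum_option]
    · rintro (_ | i)
      exacts [Set.mem_insert _ _, Set.mem_insert_of_mem _ ⟨i, rfl⟩]
    · simp [Fintype.sum_option, b.sum_repr]

theorem mem_smul_originSimplex_iff (b : Basis ι ℝ E) {t : ℝ} (ht : 0 ≤ t) (x : E) :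
    x ∈ t • originSimplex b ↔ (∀ i, 0 ≤ b.repr x i) ∧ ∑ i, b.repr x i ≤ t := by
  rcases ht.eq_or_lt with rfl | ht
  · have hne : (originSimplex b).Nonempty := (Set.insert_nonempty _ _).convexHull
    rw [Set.zero_smul_set hne, Set.mem_zero]
    constructor
    · rintro rfl
      simp
    · rintro ⟨hx0, hx⟩
      have hsum := hx.antisymm (Finset.sum_nonneg fun i _ => hx0 i)
      refine b.ext_elem fun i => ?_
      simpa using (Finset.sum_eq_zero_iff_of_nonneg fun i _ => hx0 i).1 hsum i (Finset.mem_univ i)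
  · rw [Set.mem_smul_set_iff_inv_smul_mem₀ ht.ne', mem_originSimplex_iff]
    simp only [map_smul, Finsupp.smul_apply, smul_eq_mul, ← Finset.mul_sum,
      mul_nonneg_iff_of_pos_left (inv_pos.2 ht), inv_mul_le_one₀ ht]

/-- The points of `Λ` in the half-open parallelepiped spanned by `b`. They are representatives of
the cosets of the lattice spanned by `b` in `Λ`. -/
abbrev BoxPoint (Λ : Submodule ℤ E) (b : Basis ι ℝ E) : Type _ :=
  {z : E // z ∈ ZSpan.fundamentalDomain b ∧ z ∈ Λ}

/-- The least dilation factor `n` such that `n • originSimplex b` contains `z`, when `z` has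
nonnegative coordinates. -/
noncomputable def coordHeight (b : Basis ι ℝ E) (z : E) : ℕ :=
  ⌈∑ i, b.repr z i⌉₊

theorem coordHeight_add_le_iff (b : Basis ι ℝ E) {z : E} (hz : ∀ i, 0 ≤ b.repr z i) (m n : ℕ) :
    coordHeight b z + m ≤ n ↔ ∑ i, b.repr z i + m ≤ n := by
  rw [coordHeight, ← Nat.ceil_add_natCast (Finset.sum_nonneg fun i _ => hz i), Nat.ceil_le]

theorem coordHeight_le_card (b : Basis ι ℝ E) {z : E} (hz : z ∈ ZSpan.fundamentalDomain b) :
    coordHeight b z ≤ Fintype.card ι := by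
  rw [coordHeight, Nat.ceil_le]
  calc ∑ i, b.repr z i ≤ ∑ _i : ι, (1 : ℝ) := Finset.sum_le_sum fun i _ => (hz i).2.le
    _ = Fintype.card ι := by simp

theorem repr_add_sum_nsmul (b : Basis ι ℝ E) (z : E) (y : ι → ℕ) (i : ι) :
    b.repr (z + ∑ j, y j • b j) i = b.repr z i + y i := by
  classical
  simp [Finsupp.single_apply]

theorem zspanFract_mem {Λ : Submodule ℤ E} {b : Basis ι ℝ E} (hb : ∀ i, b i ∈ Λ) {x : E}
    (hx : x ∈ Λ) : ZSpan.fract b x ∈ Λ :=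
  Λ.sub_mem hx (Submodule.span_le.2 (Set.range_subset_iff.2 hb) (ZSpan.floor b x).2)

/-- The points of `Λ` in the cone spanned by `b` are uniquely a box point plus a natural
combination of `b`. -/
noncomputable def coneEquiv (Λ : Submodule ℤ E) (b : Basis ι ℝ E) (hb : ∀ i, b i ∈ Λ) :
    {x : E // (∀ i, 0 ≤ b.repr x i) ∧ x ∈ Λ} ≃ BoxPoint Λ b × (ι → ℕ) where
  toFun x := (⟨ZSpan.fract b x, ZSpan.fract_mem_fundamentalDomain b x, zspanFract_mem hb x.2.2⟩,
    fun i => ⌊b.repr x i⌋₊)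
  invFun p := ⟨p.1 + ∑ i, p.2 i • b i, fun i => by
      rw [repr_add_sum_nsmul]
      exact add_nonneg (p.1.2.1 i).1 (Nat.cast_nonneg _),
    Λ.add_mem p.1.2.2 (Λ.sum_mem fun i _ => Λ.nsmul_mem (hb i) _)⟩
  left_inv x := Subtype.ext <| b.ext_elem fun i => by
    rw [repr_add_sum_nsmul, ZSpan.repr_fract_apply, natCast_floor_eq_intCast_floor (x.2.1 i),
      Int.fract_add_floor]
  right_inv p := by
    refine Prod.ext (Subtype.ext ?_) (funext fun i => ?_)
    · have hspan : ∑ i, p.2 i • b i ∈ Submodule.span ℤ (Set.range b) :=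
        sum_mem fun i _ => nsmul_mem (Submodule.subset_span (Set.mem_range_self i)) _
      exact (ZSpan.fract_add_ZSpan b _ hspan).trans (ZSpan.fract_eq_self.2 p.1.2.1)
    · obtain ⟨hz0, hz1⟩ := p.1.2.1 i
      change ⌊b.repr (p.1 + ∑ j, p.2 j • b j) i⌋₊ = p.2 i
      rw [repr_add_sum_nsmul, Nat.floor_add_natCast hz0, Nat.floor_eq_zero.2 hz1, zero_add]

theorem ncard_smul_originSimplex_inter (Λ : Submodule ℤ E) (b : Basis ι ℝ E) (hb : ∀ i, b i ∈ Λ)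
    [Fintype (BoxPoint Λ b)] (n : ℕ) :
    ((n : ℝ) • originSimplex b ∩ Λ).ncard =
      ∑ z : BoxPoint Λ b, Nat.card {y : ι → ℕ // coordHeight b z + ∑ i, y i ≤ n} := by
  have hcone : ∀ x : E, x ∈ (n : ℝ) • originSimplex b ∩ Λ ↔
      ((∀ i, 0 ≤ b.repr x i) ∧ x ∈ Λ) ∧ ∑ i, b.repr x i ≤ n := fun x => by
    rw [Set.mem_inter_iff, mem_smul_originSimplex_iff b n.cast_nonneg]
    tauto
  have hsum : ∀ p : BoxPoint Λ b × (ι → ℕ),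
      ∑ i, b.repr ((coneEquiv Λ b hb).symm p) i ≤ n ↔ coordHeight b p.1 + ∑ i, p.2 i ≤ n :=
    fun p => by
      rw [coordHeight_add_le_iff b fun i => (p.1.2.1 i).1, Nat.cast_sum, ← Finset.sum_add_distrib]
      exact iff_of_eq (congrArg (· ≤ (n : ℝ))
        (Finset.sum_congr rfl fun i _ => repr_add_sum_nsmul b _ _ i))
  have e : ↥((n : ℝ) • originSimplex b ∩ Λ) ≃
      {p : BoxPoint Λ b × (ι → ℕ) // coordHeight b p.1 + ∑ i, p.2 i ≤ n} :=
    (Equiv.subtypeEquivRight hcone).trans <|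
      (Equiv.subtypeSubtypeEquivSubtypeInter _ fun x => ∑ i, b.repr x i ≤ n).symm.trans <|
        (coneEquiv Λ b hb).subtypeEquiv fun x => by rw [← hsum, Equiv.symm_apply_apply]
  have := fun z : BoxPoint Λ b => finite_natSum_le ι (coordHeight b z.1) n
  rw [← Nat.card_coe_set_eq, Nat.card_congr (e.trans (Equiv.subtypeProdEquivSigmaSubtype
    fun (z : BoxPoint Λ b) (y : ι → ℕ) => coordHeight b z.1 + ∑ i, y i ≤ n)), Nat.card_sigma]

end Simplex

section DeltaPolynomial

/-- The lattice `ℤ^N` inside `ℝ^N`. -/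
abbrev integerLattice (N : ℕ) : Submodule ℤ (Fin N → ℝ) :=
  Submodule.span ℤ (Set.range (Pi.basisFun ℝ (Fin N)))

theorem mem_integerLattice_iff {N : ℕ} (x : Fin N → ℝ) :
    x ∈ integerLattice N ↔ ∃ y : Fin N → ℤ, (fun i => (y i : ℝ)) = x := by
  rw [Basis.mem_span_iff_repr_mem]
  simp only [Pi.basisFun_repr, Set.mem_range, algebraMap_int_eq, eq_intCast, funext_iff,
    Classical.skolem]

theorem ehr_eq_ncard_inter {N : ℕ} (P : Set (Fin N → ℝ)) (n : ℕ) :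
    ehr P n = ((n : ℝ) • P ∩ integerLattice N).ncard := by
  have hinj : Function.Injective fun (y : Fin N → ℤ) i => (y i : ℝ) := fun y z h =>
    funext fun i => Int.cast_injective (congrFun h i)
  rw [ehr, ← Set.ncard_image_of_injective _ hinj]
  congr 1
  ext x
  rw [Set.mem_inter_iff, SetLike.mem_coe, mem_integerLattice_iff]
  constructor
  · rintro ⟨y, hy, rfl⟩
    exact ⟨hy, y, rfl⟩
  · rintro ⟨hx, y, rfl⟩
    exact ⟨y, hx, rfl⟩

/-- The generating function of the numbers of lattice points in the dilations of `P`. -/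
noncomputable def ehrhartSeries {N : ℕ} (P : Set (Fin N → ℝ)) : PowerSeries ℤ :=
  PowerSeries.mk fun n => (ehr P n : ℤ)

theorem ehrhartSeries_originSimplex_mul_one_sub_X_pow {ι : Type*} [Fintype ι] {N : ℕ}
    (b : Basis ι ℝ (Fin N → ℝ)) (hb : ∀ i, b i ∈ integerLattice N)
    [Fintype (BoxPoint (integerLattice N) b)] :
    ehrhartSeries (originSimplex b) * (1 - PowerSeries.X) ^ (Fintype.card ι + 1) =
      ∑ z : BoxPoint (integerLattice N) b, PowerSeries.X ^ coordHeight b z := by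
  have hseries : ehrhartSeries (originSimplex b) = ∑ z : BoxPoint (integerLattice N) b,
      PowerSeries.mk fun n => (Nat.card {y : ι → ℕ // coordHeight b z + ∑ i, y i ≤ n} : ℤ) := by
    ext n
    simp only [ehrhartSeries, map_sum, PowerSeries.coeff_mk, ehr_eq_ncard_inter,
      ncard_smul_originSimplex_inter _ b hb, Nat.cast_sum]
  simp only [hseries, Finset.sum_mul, mk_natCard_add_natSum_le_mul_one_sub_X_pow]

theorem coeff_one_sub_X_pow (m i : ℕ) :
    PowerSeries.coeff i ((1 - PowerSeries.X : PowerSeries ℤ) ^ m) = (-1) ^ i * m.choose i := by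
  have h : (1 - PowerSeries.X : PowerSeries ℤ) ^ m =
      (((1 + Polynomial.X : Polynomial ℤ) ^ m).comp (Polynomial.C (-1) * Polynomial.X) :
        Polynomial ℤ) := by
    simp [sub_eq_add_neg]
  rw [h, Polynomial.coeff_coe, Polynomial.comp_C_mul_X_coeff, Polynomial.coeff_one_add_X_pow,
    mul_comm]

theorem deltaVec_eq_coeff {N : ℕ} (P : Set (Fin N → ℝ)) (d i : ℕ) :
    deltaVec P d i =
      PowerSeries.coeff i (ehrhartSeries P * (1 - PowerSeries.X) ^ (d + 1)) := by
  rw [PowerSeries.coeff_mul, Finset.Nat.sum_antidiagonal_eq_sum_range_succ_mk]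
  simp only [ehrhartSeries, PowerSeries.coeff_mk, coeff_one_sub_X_pow, deltaVec,
    Nat.succ_eq_add_one]
  exact Finset.sum_congr rfl fun j _ => by ring

theorem sum_deltaVec_mul_X_pow_eq_trunc {N : ℕ} (P : Set (Fin N → ℝ)) (d : ℕ) :
    ∑ i ∈ Finset.range (d + 1), Polynomial.C (deltaVec P d i) * Polynomial.X ^ i =
      PowerSeries.trunc (d + 1) (ehrhartSeries P * (1 - PowerSeries.X) ^ (d + 1)) := by
  ext i
  simp only [Polynomial.finsetSum_coeff, Polynomial.coeff_C_mul_X_pow, Finset.sum_ite_eq,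
    Finset.mem_range, PowerSeries.coeff_trunc, deltaVec_eq_coeff]

theorem sum_deltaVec_originSimplex_mul_X_pow {d : ℕ} (b : Basis (Fin d) ℝ (Fin d → ℝ))
    (hb : ∀ i, b i ∈ integerLattice d) [Fintype (BoxPoint (integerLattice d) b)] :
    ∑ i ∈ Finset.range (d + 1),
        Polynomial.C (deltaVec (originSimplex b) d i) * Polynomial.X ^ i =
      ∑ z : BoxPoint (integerLattice d) b, Polynomial.X ^ coordHeight b z := by
  have hseries := ehrhartSeries_originSimplex_mul_one_sub_X_pow b hb
  have hdeg : (∑ z : BoxPoint (integerLattice d) b,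
      (Polynomial.X : Polynomial ℤ) ^ coordHeight b z).natDegree < d + 1 := by
    refine Nat.lt_succ_of_le (Polynomial.natDegree_sum_le_of_forall_le _ _ fun z _ => ?_)
    simpa using coordHeight_le_card b z.2.1
  rw [Fintype.card_fin] at hseries
  have hcoe : (∑ z : BoxPoint (integerLattice d) b, PowerSeries.X ^ coordHeight b z) =
      ((∑ z : BoxPoint (integerLattice d) b, Polynomial.X ^ coordHeight b z : Polynomial ℤ) :
        PowerSeries ℤ) := by
    rw [← Polynomial.coeToPowerSeries.ringHom_apply, map_sum]
    simp
  rw [sum_deltaVec_mul_X_pow_eq_trunc, hseries, hcoe, PowerSeries.trunc_coe_eq_self hdeg]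

end DeltaPolynomial

section UpdateRow

variable {ι : Type*} [DecidableEq ι]

theorem of_ite_eq_updateRow_one {R : Type*} [Zero R] [One R] (k : ι) (w : ι → R) :
    (Matrix.of fun i j => if i = k then w j else if i = j then 1 else 0) =
      Matrix.updateRow 1 k w := by
  ext i j
  rw [Matrix.updateRow_apply, Matrix.one_apply, Matrix.of_apply]

/-- The basis of `K^ι` obtained from the standard one by replacing the `k`-th vector by `w`. -/
noncomputable def updateBasis {K : Type*} [Field K] [Finite ι] (k : ι) (w : ι → K)
    (hw : w k ≠ 0) : Basis ι K (ι → K) :=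
  Basis.ofEquivFun
    { toFun := fun x => x + (x k / w k) • (Pi.single k 1 - w)
      map_add' := fun x y => by simp only [Pi.add_apply, add_div, add_smul]; abel
      map_smul' := fun c x => by
        simp only [Pi.smul_apply, smul_eq_mul, mul_div_assoc, mul_smul, smul_add, RingHom.id_apply]
      invFun := fun c => c + c k • (w - Pi.single k 1)
      left_inv := fun x => by
        ext j
        simp only [Pi.add_apply, Pi.smul_apply, Pi.sub_apply, Pi.single_eq_same, smul_eq_mul]
        field_simp
        ring
      right_inv := fun c => by
        ext j
        simp only [Pi.add_apply, Pi.smul_apply, Pi.sub_apply, Pi.single_eq_same, smul_eq_mul]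
        field_simp
        ring }

variable {K : Type*} [Field K] [Finite ι]

theorem updateBasis_apply (k : ι) (w : ι → K) (hw : w k ≠ 0) (i : ι) :
    updateBasis k w hw i = (1 : Matrix ι ι K).updateRow k w i := by
  rw [updateBasis, Basis.coe_ofEquivFun]
  rcases eq_or_ne i k with rfl | hi
  · simp
  · ext j
    simp [hi, hi.symm, Matrix.one_apply, Pi.single_apply, eq_comm]

theorem updateBasis_repr_apply (k : ι) (w : ι → K) (hw : w k ≠ 0) (x : ι → K) (j : ι) :
    (updateBasis k w hw).repr x j = x j + x k / w k * (Pi.single (M := fun _ => K) k 1 j - w j) :=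
  rfl

theorem updateBasis_repr_apply_self (k : ι) (w : ι → K) (hw : w k ≠ 0) (x : ι → K) :
    (updateBasis k w hw).repr x k = x k / w k := by
  rw [updateBasis_repr_apply, Pi.single_eq_same, mul_sub, div_mul_cancel₀ _ hw, mul_one,
    add_sub_cancel]

theorem eq_of_mem_fundamentalDomain_updateBasis {N : ℕ} {k : Fin N} {w : Fin N → ℝ}
    (hw : w k ≠ 0) {x y : Fin N → ℝ} (hxΛ : x ∈ integerLattice N) (hyΛ : y ∈ integerLattice N)
    (hx : x ∈ ZSpan.fundamentalDomain (updateBasis k w hw))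
    (hy : y ∈ ZSpan.fundamentalDomain (updateBasis k w hw)) (hxy : x k = y k) : x = y := by
  obtain ⟨m, rfl⟩ := (mem_integerLattice_iff x).1 hxΛ
  obtain ⟨n, rfl⟩ := (mem_integerLattice_iff y).1 hyΛ
  funext j
  obtain ⟨hx0, hx1⟩ := hx j
  obtain ⟨hy0, hy1⟩ := hy j
  simp only [updateBasis_repr_apply, hxy] at hx0 hx1 hy0 hy1
  have hmn : m j < n j + 1 := by exact_mod_cast (by linarith : (m j : ℝ) < n j + 1)
  have hnm : n j < m j + 1 := by exact_mod_cast (by linarith : (n j : ℝ) < m j + 1)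
  exact congrArg Int.cast (by omega : m j = n j)

end UpdateRow

section RowSimplex

variable {d D : ℕ} {k : Fin d} {w : Fin d → ℤ}

/-- The rows of `Matrix.updateRow 1 k w`, as a basis of `ℝ^d`. -/
noncomputable def rowBasis (hD : 0 < D) (hw : w k = D) : Basis (Fin d) ℝ (Fin d → ℝ) :=
  updateBasis k (fun j => (w j : ℝ)) (by simp [hw, hD.ne'])

theorem rowBasis_apply (hD : 0 < D) (hw : w k = D) (i : Fin d) :
    rowBasis hD hw i = fun j => ((1 : Matrix (Fin d) (Fin d) ℤ).updateRow k w i j : ℝ) := by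
  ext j
  rw [rowBasis, updateBasis_apply, Matrix.updateRow_apply, Matrix.updateRow_apply,
    Matrix.one_apply, Matrix.one_apply]
  split_ifs <;> simp

theorem rowBasis_mem_integerLattice (hD : 0 < D) (hw : w k = D) (i : Fin d) :
    rowBasis hD hw i ∈ integerLattice d :=
  (mem_integerLattice_iff _).2 ⟨_, (rowBasis_apply hD hw i).symm⟩

/-- The point `w - ⌊i w / D⌋` of `ℤ^d`. For `1 ≤ i ≤ D` these are the box points of the simplex on
the rows of `Matrix.updateRow 1 k w`, where `w k = D`. -/
noncomputable def rowBoxPoint (D : ℕ) (w : Fin d → ℤ) (i : ℕ) : Fin d → ℝ :=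
  fun j => ((w j - ⌊(i * w j / D : ℝ)⌋ : ℤ) : ℝ)

theorem rowBoxPoint_apply_self (hD : 0 < D) (hw : w k = D) (i : ℕ) :
    rowBoxPoint D w i k = D - i := by
  simp [rowBoxPoint, hw, hD.ne']

theorem rowBoxPoint_mem_integerLattice (i : ℕ) : rowBoxPoint D w i ∈ integerLattice d :=
  (mem_integerLattice_iff _).2 ⟨_, rfl⟩

theorem rowBasis_repr_rowBoxPoint (hD : 0 < D) (hw : w k = D) (i : ℕ) (j : Fin d) :
    (rowBasis hD hw).repr (rowBoxPoint D w i) j =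
      Int.fract (i * w j / D : ℝ) + Pi.single (M := fun _ => ℝ) k (1 - i / D) j := by
  have hD0 : (D : ℝ) ≠ 0 := by positivity
  have hsingle : Pi.single (M := fun _ => ℝ) k (1 - (i / D : ℝ)) j =
      (1 - i / D) * Pi.single (M := fun _ => ℝ) k 1 j := by
    simp [Pi.single_apply]
  rw [rowBasis, updateBasis_repr_apply, rowBoxPoint_apply_self hD hw, rowBoxPoint, Int.fract, hw,
    hsingle]
  push_cast
  field_simp
  ring

theorem rowBoxPoint_mem_fundamentalDomain (hD : 0 < D) (hw : w k = D) {i : ℕ}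
    (hi : i ∈ Finset.Icc 1 D) :
    rowBoxPoint D w i ∈ ZSpan.fundamentalDomain (rowBasis hD hw) := by
  obtain ⟨hi1, hiD⟩ := Finset.mem_Icc.1 hi
  intro j
  rcases eq_or_ne j k with rfl | hj
  · have hi0 : (0 : ℝ) < i / D := by positivity
    have hi1 : (i : ℝ) / D ≤ 1 := div_le_one_of_le₀ (by exact_mod_cast hiD) (by positivity)
    rw [rowBasis, updateBasis_repr_apply_self, rowBoxPoint_apply_self hD hw, hw, Int.cast_natCast,
      sub_div, div_self (by positivity)]
    constructor <;> linarith
  · rw [rowBasis_repr_rowBoxPoint, Pi.single_eq_of_ne hj, add_zero]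
    exact ⟨Int.fract_nonneg _, Int.fract_lt_one _⟩

theorem coordHeight_rowBoxPoint (hD : 0 < D) (hw : w k = D) (i : ℕ) :
    coordHeight (rowBasis hD hw) (rowBoxPoint D w i) =
      ⌈(1 : ℝ) - i / D + ∑ j, Int.fract (i * w j / D : ℝ)⌉₊ := by
  simp only [coordHeight, rowBasis_repr_rowBoxPoint, Finset.sum_add_distrib,
    Finset.sum_pi_single', Finset.mem_univ, if_true, add_comm]

theorem exists_apply_eq_sub_of_mem_fundamentalDomain_rowBasis (hD : 0 < D) (hw : w k = D)
    {x : Fin d → ℝ} (hxΛ : x ∈ integerLattice d)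
    (hx : x ∈ ZSpan.fundamentalDomain (rowBasis hD hw)) :
    ∃ i ∈ Finset.Icc 1 D, x k = D - i := by
  obtain ⟨y, rfl⟩ := (mem_integerLattice_iff x).1 hxΛ
  have hD0 : (0 : ℝ) < D := by positivity
  obtain ⟨h0, h1⟩ := hx k
  rw [rowBasis, updateBasis_repr_apply_self, hw, Int.cast_natCast] at h0 h1
  rw [le_div_iff₀ hD0, zero_mul] at h0
  rw [div_lt_one hD0] at h1
  have hy0 : 0 ≤ y k := by exact_mod_cast h0
  have hyD : y k < D := by exact_mod_cast h1
  refine ⟨(D - y k).toNat, Finset.mem_Icc.2 (by omega), ?_⟩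
  have hcast : (((D - y k).toNat : ℤ) : ℝ) = D - y k := by
    rw [Int.toNat_of_nonneg (by omega)]
    push_cast
    rfl
  rw [← Int.cast_natCast (D - y k).toNat, hcast, sub_sub_cancel]

theorem bijOn_rowBoxPoint (hD : 0 < D) (hw : w k = D) :
    Set.BijOn (rowBoxPoint D w) (Finset.Icc 1 D)
      {z | z ∈ ZSpan.fundamentalDomain (rowBasis hD hw) ∧ z ∈ integerLattice d} := by
  refine ⟨fun i hi => ?_, fun i _ i' _ h => ?_, fun z ⟨hz, hzΛ⟩ => ?_⟩
  · exact ⟨rowBoxPoint_mem_fundamentalDomain hD hw hi, rowBoxPoint_mem_integerLattice i⟩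
  · have hk := congrFun h k
    rw [rowBoxPoint_apply_self hD hw, rowBoxPoint_apply_self hD hw] at hk
    exact_mod_cast sub_right_injective hk
  · obtain ⟨i, hi, hzk⟩ := exists_apply_eq_sub_of_mem_fundamentalDomain_rowBasis hD hw hzΛ hz
    exact ⟨i, hi, eq_of_mem_fundamentalDomain_updateBasis _ (rowBoxPoint_mem_integerLattice i) hzΛ
      (rowBoxPoint_mem_fundamentalDomain hD hw hi) hz
      ((rowBoxPoint_apply_self hD hw i).trans hzk.symm)⟩

theorem sum_deltaVec_originSimplex_updateRow_mul_X_pow (hD : 0 < D) (hw : w k = D) :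
    ∑ i ∈ Finset.range (d + 1), Polynomial.C (deltaVec (originSimplex fun i j =>
        ((1 : Matrix (Fin d) (Fin d) ℤ).updateRow k w i j : ℝ)) d i) * Polynomial.X ^ i =
      ∑ i ∈ Finset.Icc 1 D, Polynomial.X ^
        ⌈(1 : ℝ) - i / D + ∑ j, Int.fract (i * w j / D : ℝ)⌉₊ := by
  let e : ↥(Finset.Icc 1 D) ≃ BoxPoint (integerLattice d) (rowBasis hD hw) :=
    (bijOn_rowBoxPoint hD hw).equiv
  let _ : Fintype (BoxPoint (integerLattice d) (rowBasis hD hw)) := Fintype.ofEquiv _ e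
  rw [← funext (rowBasis_apply hD hw), sum_deltaVec_originSimplex_mul_X_pow _
    (rowBasis_mem_integerLattice hD hw), ← e.sum_comp, ← Finset.sum_coe_sort (Finset.Icc 1 D)]
  exact Finset.sum_congr rfl fun i _ => congrArg _ (coordHeight_rowBoxPoint hD hw i)

end RowSimplex

section Residues

variable {D : ℕ}

theorem fract_mul_div_eq_of_modEq (i : ℕ) {m n : ℤ} (hmn : m ≡ n [ZMOD D]) :
    Int.fract (i * m / D : ℚ) = Int.fract (i * n / D : ℚ) := by
  rcases D.eq_zero_or_pos with rfl | hD
  · simp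
  obtain ⟨c, hc⟩ := hmn.dvd
  have hD0 : (D : ℚ) ≠ 0 := by positivity
  rw [Int.fract_eq_fract]
  refine ⟨-(i * c), ?_⟩
  rw [← sub_div, ← mul_sub, ← Int.cast_sub, ← neg_sub n m, hc, div_eq_iff hD0]
  push_cast
  ring

theorem sum_ite_modEq_fract_mul_div (hD : 0 < D) (i : ℕ) (m : ℤ) :
    ∑ j ∈ Finset.Icc 1 (D - 1), (if m ≡ j [ZMOD D] then Int.fract (i * j / D : ℚ) else 0) =
      Int.fract (i * m / D : ℚ) := by
  obtain ⟨r, hr⟩ := Int.eq_ofNat_of_zero_le (Int.emod_nonneg m (by omega : (D : ℤ) ≠ 0))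
  have hrD : r < D := by exact_mod_cast hr ▸ Int.emod_lt_of_pos m (by omega)
  have hm : m ≡ r [ZMOD D] := hr ▸ (Int.mod_modEq m D).symm
  have hiff : ∀ j ∈ Finset.range D, m ≡ (j : ℤ) [ZMOD D] ↔ r = j := fun j hj => by
    rw [Int.ModEq, hr, Int.emod_eq_of_lt (by omega) (by exact_mod_cast Finset.mem_range.1 hj)]
    norm_cast
  have hrange : Finset.Icc 1 (D - 1) = (Finset.range D).erase 0 := by
    ext j
    simp only [Finset.mem_Icc, Finset.mem_erase, Finset.mem_range]
    omega
  calc ∑ j ∈ Finset.Icc 1 (D - 1), (if m ≡ j [ZMOD D] then Int.fract (i * j / D : ℚ) else 0)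
    _ = ∑ j ∈ Finset.range D, (if m ≡ j [ZMOD D] then Int.fract (i * j / D : ℚ) else 0) := by
      rw [hrange]
      exact Finset.sum_erase _ (by simp)
    _ = ∑ j ∈ Finset.range D, (if r = j then Int.fract (i * j / D : ℚ) else 0) :=
      Finset.sum_congr rfl fun j hj => by simp only [hiff j hj]
    _ = Int.fract (i * (r : ℤ) / D : ℚ) := by
      rw [Finset.sum_ite_eq, if_pos (Finset.mem_range.2 hrD), Int.cast_natCast]
    _ = Int.fract (i * m / D : ℚ) := (fract_mul_div_eq_of_modEq i hm).symm

theorem sum_fract_mul_card_modEq {κ : Type*} [Fintype κ] (hD : 0 < D) (w : κ → ℤ) (i : ℕ) :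
    ∑ j ∈ Finset.Icc 1 (D - 1), Int.fract (i * j / D : ℚ) *
        (Finset.univ.filter fun ℓ => w ℓ ≡ j [ZMOD D]).card =
      ∑ ℓ, Int.fract (i * w ℓ / D : ℚ) := by
  simp only [← sum_ite_modEq_fract_mul_div hD]
  rw [Finset.sum_comm]
  refine Finset.sum_congr rfl fun j _ => ?_
  rw [← Finset.sum_filter, Finset.sum_const, nsmul_eq_mul, mul_comm]

theorem ceil_one_sub_add_eq_toNat {κ : Type*} (S : Finset κ) (d D i : ℕ) (w : κ → ℤ) :
    ⌈(1 : ℝ) - i / D + ∑ j ∈ S, Int.fract (i * w j / D : ℝ)⌉₊ =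
      ((d : ℤ) + 1 - (⌊(i / D : ℚ) - ∑ j ∈ S, Int.fract (i * w j / D : ℚ)⌋ + d)).toNat := by
  have hcast : (1 : ℝ) - i / D + ∑ j ∈ S, Int.fract (i * w j / D : ℝ) =
      ((-(i / D - ∑ j ∈ S, Int.fract (i * w j / D : ℚ)) + 1 : ℚ) : ℝ) := by
    push_cast [Rat.cast_fract]
    ring
  rw [← Int.ceil_toNat, hcast, Rat.ceil_cast, Int.ceil_add_one, Int.ceil_neg]
  congr 1
  ring

theorem filter_lt_and_eq_eq_filter_modEq {α : Type*} [Fintype α] [LinearOrder α] (k : α) {a : α → ℤ}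
    (ha : ∀ ℓ, ℓ < k → 0 ≤ a ℓ ∧ a ℓ < (D : ℤ)) {j : ℕ} (hj : j ∈ Finset.Icc 1 (D - 1)) :
    (Finset.univ.filter fun ℓ => ℓ < k ∧ a ℓ = j) = Finset.univ.filter fun ℓ =>
      (if ℓ = k then (D : ℤ) else if ℓ < k then a ℓ else 0) ≡ j [ZMOD D] := by
  obtain ⟨hj1, hjD⟩ := Finset.mem_Icc.1 hj
  have hmod : (j : ℤ) % D = j := Int.emod_eq_of_lt (by omega) (by omega)
  refine Finset.filter_congr fun ℓ _ => ?_
  rw [Int.ModEq, hmod]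
  rcases lt_trichotomy ℓ k with hℓ | rfl | hℓ
  · rw [if_neg hℓ.ne, if_pos hℓ, Int.emod_eq_of_lt (ha ℓ hℓ).1 (ha ℓ hℓ).2, and_iff_right hℓ]
  · simp only [lt_irrefl, false_and, if_true, Int.emod_self, false_iff]
    omega
  · simp only [hℓ.not_gt, hℓ.ne', false_and, if_false, Int.zero_emod, false_iff]
    omega

end Residues

theorem stmt5_general (d D : ℕ) (hD : 1 ≤ D) (k : Fin d) (w : Fin d → ℤ) (hw : w k = D)
    (A : Matrix (Fin d) (Fin d) ℤ) (hA : A = Matrix.updateRow 1 k w) (dj : ℕ → ℕ)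
    (hdj : ∀ j ∈ Finset.Icc 1 (D - 1),
      dj j = (Finset.univ.filter fun ℓ : Fin d => w ℓ ≡ j [ZMOD D]).card)
    (s : ℕ → ℤ)
    (hs : ∀ i : ℕ, s i =
      ⌊(i : ℚ) / D - ∑ j ∈ Finset.Icc 1 (D - 1),
        Int.fract ((i * j : ℚ) / D) * (dj j : ℚ)⌋ + d)
    (P : Set (Fin d → ℝ))
    (hP : P = convexHull ℝ
      (insert (0 : Fin d → ℝ) (Set.range fun i j => (A i j : ℝ)))) :
    ∑ i ∈ Finset.range (d + 1), Polynomial.C (deltaVec P d i) * Polynomial.X ^ i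
    = ∑ i ∈ Finset.Icc 1 D,
        (Polynomial.X : Polynomial ℤ) ^ ((d : ℤ) + 1 - s i).toNat := by
  subst hA hP
  refine (sum_deltaVec_originSimplex_updateRow_mul_X_pow hD hw).trans ?_
  refine Finset.sum_congr rfl fun i _ => congrArg _ ?_
  rw [ceil_one_sub_add_eq_toNat _ d, hs, ← sum_fract_mul_card_modEq hD,
    Finset.sum_congr rfl fun j hj => by rw [← hdj j hj]]

theorem stmt5 (d D : ℕ) (hD : 1 ≤ D) (k : Fin d) (a : Fin d → ℤ)
    (ha : ∀ ℓ : Fin d, ℓ < k → 0 ≤ a ℓ ∧ a ℓ < (D : ℤ))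
    (A : Matrix (Fin d) (Fin d) ℤ)
    (hA : A = Matrix.of fun i j =>
      if i = k then (if j = k then (D : ℤ) else if j < k then a j else 0)
      else if i = j then 1 else 0)
    (dj : ℕ → ℕ)
    (hdj : ∀ j : ℕ, dj j =
      (Finset.univ.filter fun ℓ : Fin d => ℓ < k ∧ a ℓ = (j : ℤ)).card)
    (s : ℕ → ℤ)
    (hs : ∀ i : ℕ, s i =
      ⌊(i : ℚ) / D - ∑ j ∈ Finset.Icc 1 (D - 1),
        Int.fract ((i * j : ℚ) / D) * (dj j : ℚ)⌋ + d)
    (P : Set (Fin d → ℝ))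
    (hP : P = convexHull ℝ
      (insert (0 : Fin d → ℝ) (Set.range fun i j => (A i j : ℝ)))) :
    ∑ i ∈ Finset.range (d + 1), Polynomial.C (deltaVec P d i) * Polynomial.X ^ i
    = ∑ i ∈ Finset.Icc 1 D,
        (Polynomial.X : Polynomial ℤ) ^ ((d : ℤ) + 1 - s i).toNat :=
  stmt5_general d D hD k _ (if_pos rfl) A (hA.trans (of_ite_eq_updateRow_one k _)) dj
    (fun j hj => (hdj j).trans (congrArg _ (filter_lt_and_eq_eq_filter_modEq k ha hj))) s hs P hP
end
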